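/- Let T: Lip(X,E) → Lip(Y,F) be a linear biseparating map and let h: Y → X be a homeomorphism such that (Tf)(y) = (T(\widehat{f(h(y))}))(y) for all f ∈ Lip(X,E) and y ∈ Y, where for e ∈ E, ê denotes the constant function on X with value e. Then h is bi-Lipschitz: both h and h⁻¹ are Lipschitz maps. -/

import Mathlib

/-!
Put `J_y e = (T ê) y`, so that `(T f) y = J_y (f (h y))`; each `J_y` is linear but need not be
continuous, and the continuity of `T` is not available either. Two observations replace it.

* A map `h` into a bounded metric space is Lipschitz once `φ ∘ h` is Lipschitz for every bounded
  Lipschitz scalar function `φ` (`exists_lipschitzWith_of_comp`, by Banach–Steinhaus on `ℓ¹`).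
* To test this for `h`, take `u ≠ 0` in `F` and `f` with `T f = û`. Then `T (φ f) = (φ ∘ h) u`,
  so `φ ∘ h` is Lipschitz. To test it for `h⁻¹`, take `e ≠ 0` in `E` and `f` with
  `T f = φ · T ê`. Then `J_y (f (h y)) = J_y (φ y • e)`, so `f = (φ ∘ h⁻¹) e` provided that the
  `J_y` are injective.

Injectivity of `J_y` is where separation enters. Since `T⁻¹` is separating, it is local: if `T f`
vanishes near `y` then `f (h y) = 0` (`IsBisep.eq_zero_of_eventually`). Suppose now that only
`(T f) y₀ = 0`, with `y₀` not isolated. As `‖T f y‖ = O(d(y, y₀))`, the function `T f` may be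
multiplied by a cut-off oscillating between `0` and `1` at a geometric sequence of distances to
`y₀` and stays Lipschitz. Its preimage `f₁` then satisfies `f₁ (h y) = 0` and `f₁ (h y) = f (h y)`
along two sequences tending to `y₀`, whence `f (h y₀) = 0` by continuity
(`IsBisep.eq_zero_of_apply_eq_zero`). Scalars are restricted to `ℝ` throughout.
-/

open Metric Set Function Bornology
open scoped NNReal

/-- `f` is a bounded Lipschitz function. -/
def IsLip {X E : Type*} [PseudoMetricSpace X] [NormedAddCommGroup E] (f : X → E) : Prop :=
  (∃ K : ℝ≥0, LipschitzWith K f) ∧ ∃ C : ℝ, ∀ x, ‖f x‖ ≤ C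

/-- The cozero set of `f`. -/
def coz {X E : Type*} [Zero E] (f : X → E) : Set X := {x | f x ≠ 0}

/-- The norm `‖f‖_L = max {‖f‖_∞, L(f)}` on bounded Lipschitz functions. -/
noncomputable def lipNorm {X E : Type*} [PseudoMetricSpace X] [NormedAddCommGroup E]
    (f : X → E) : ℝ :=
  max (⨆ x, ‖f x‖) (⨆ p : X × X, ‖f p.1 - f p.2‖ / dist p.1 p.2)

/-- `T` is a linear biseparating map from `Lip(X,E)` onto `Lip(Y,F)`:
it maps bounded Lipschitz functions to bounded Lipschitz functions, is linear,
restricts to a bijection between the spaces of bounded Lipschitz functions, and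
both `T` and its inverse are separating (disjointness preserving). -/
structure IsBisep (𝕂 : Type*) {X Y E F : Type*} [RCLike 𝕂]
    [PseudoMetricSpace X] [PseudoMetricSpace Y]
    [NormedAddCommGroup E] [NormedSpace 𝕂 E] [NormedAddCommGroup F] [NormedSpace 𝕂 F]
    (T : (X → E) → (Y → F)) : Prop where
  maps_lip : ∀ f, IsLip f → IsLip (T f)
  map_add : ∀ f g, IsLip f → IsLip g → T (f + g) = T f + T g
  map_smul : ∀ (c : 𝕂) (f : X → E), IsLip f → T (c • f) = c • T f
  inj : ∀ f g, IsLip f → IsLip g → T f = T g → f = g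
  surj : ∀ g, IsLip g → ∃ f, IsLip f ∧ T f = g
  sep : ∀ f g, IsLip f → IsLip g → coz f ∩ coz g = ∅ → coz (T f) ∩ coz (T g) = ∅
  sep_inv : ∀ f g, IsLip f → IsLip g → coz (T f) ∩ coz (T g) = ∅ → coz f ∩ coz g = ∅

/-! ### Bounded Lipschitz functions -/

section LipFunctions

variable {X E : Type*} [PseudoMetricSpace X] [NormedAddCommGroup E]

lemma isLip_of_real_bounds {f : X → E} (K C : ℝ)
    (hK : ∀ x y, ‖f x - f y‖ ≤ K * dist x y) (hC : ∀ x, ‖f x‖ ≤ C) : IsLip f :=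
  ⟨⟨K.toNNReal, LipschitzWith.of_dist_le' fun x y => by simpa [dist_eq_norm] using hK x y⟩, C, hC⟩

lemma IsLip.exists_real_bounds {f : X → E} (hf : IsLip f) :
    ∃ K C : ℝ, 0 ≤ K ∧ (∀ x y, ‖f x - f y‖ ≤ K * dist x y) ∧ ∀ x, ‖f x‖ ≤ C := by
  obtain ⟨⟨K, hK⟩, C, hC⟩ := hf
  exact ⟨K, C, K.2, fun x y => by simpa [dist_eq_norm] using hK.dist_le_mul x y, hC⟩

lemma isLip_const (e : E) : IsLip (fun _ : X => e) :=
  isLip_of_real_bounds 0 ‖e‖ (by simp) (by simp)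

lemma IsLip.smul [NormedSpace ℝ E] {φ : X → ℝ} {f : X → E} (hφ : IsLip φ) (hf : IsLip f) :
    IsLip (fun x => φ x • f x) := by
  obtain ⟨K, C, -, hK, hC⟩ := hφ.exists_real_bounds
  obtain ⟨L, D, -, hL, hD⟩ := hf.exists_real_bounds
  refine isLip_of_real_bounds (C * L + K * D) (C * D) (fun x y => ?_) (fun x => ?_)
  · have h1 : φ x • f x - φ y • f y = φ x • (f x - f y) + (φ x - φ y) • f y := by
      rw [smul_sub, sub_smul]; abel
    have h2 : ‖φ x‖ * ‖f x - f y‖ ≤ C * (L * dist x y) :=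
      mul_le_mul (hC x) (hL x y) (norm_nonneg _) ((norm_nonneg _).trans (hC x))
    have h3 : ‖φ x - φ y‖ * ‖f y‖ ≤ K * dist x y * D :=
      mul_le_mul (hK x y) (hD y) (norm_nonneg _) ((norm_nonneg _).trans (hK x y))
    rw [h1]
    refine (norm_add_le _ _).trans ?_
    rw [norm_smul, norm_smul]
    linarith
  · rw [norm_smul]
    exact mul_le_mul (hC x) (hD x) (norm_nonneg _) ((norm_nonneg _).trans (hC x))

end LipFunctions

/-! ### Maps pulling back Lipschitz functions to Lipschitz functions -/

section PullBack

variable {X Y : Type*}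

lemma summable_norm_of_lp_one (a : lp (fun _ : X => ℝ) 1) : Summable fun p => ‖a p‖ := by
  simpa using (lp.memℓp a).summable (by simp)

lemma norm_lp_one (a : lp (fun _ : X => ℝ) 1) : ‖a‖ = ∑' p, ‖a p‖ := by
  simp [lp.norm_eq_tsum_rpow (p := 1) (by simp) a]

lemma summable_mul_of_abs_le {D : ℝ} {w : X → ℝ} (hw : ∀ p, |w p| ≤ D)
    (a : lp (fun _ : X => ℝ) 1) : Summable fun p => a p * w p := by
  refine Summable.of_norm_bounded ((summable_norm_of_lp_one a).mul_right D) fun p => ?_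
  rw [norm_mul]
  exact mul_le_mul_of_nonneg_left (hw p) (norm_nonneg _)

lemma abs_tsum_mul_le {D : ℝ} {w : X → ℝ} (hw : ∀ p, |w p| ≤ D)
    (a : lp (fun _ : X => ℝ) 1) : |∑' p, a p * w p| ≤ D * ‖a‖ := by
  rw [norm_lp_one, ← tsum_mul_left, ← Real.norm_eq_abs]
  refine tsum_of_norm_bounded ((summable_norm_of_lp_one a).mul_left D).hasSum fun p => ?_
  rw [norm_mul, mul_comm]
  exact mul_le_mul_of_nonneg_right (hw p) (norm_nonneg _)

/-- The functional `a ↦ ∑ₚ aₚ wₚ` on `ℓ¹(X)` given by a bounded weight `w`. -/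
noncomputable def weightFunctional {D : ℝ} (w : X → ℝ) (hw : ∀ p, |w p| ≤ D) :
    lp (fun _ : X => ℝ) 1 →L[ℝ] ℝ :=
  LinearMap.mkContinuous
    { toFun := fun a => ∑' p, a p * w p
      map_add' := fun a b => by
        rw [← (summable_mul_of_abs_le hw a).tsum_add (summable_mul_of_abs_le hw b)]
        simp [add_mul]
      map_smul' := fun c a => by
        simp [mul_assoc, tsum_mul_left] }
    D (fun a => abs_tsum_mul_le hw a)

variable [MetricSpace X] [MetricSpace Y]

/-- A map `h` into a bounded metric space is Lipschitz as soon as `φ ∘ h` is Lipschitz for every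
bounded Lipschitz `φ`. The uniform bound over the functions `φ = dist p ·` comes from
Banach–Steinhaus on `ℓ¹(X)`, whose element `a` stands for `φ = ∑ₚ aₚ dist p ·`. -/
lemma exists_lipschitzWith_of_comp (hXb : IsBounded (univ : Set X)) (h : Y → X)
    (H : ∀ φ : X → ℝ, IsLip φ → ∃ K : ℝ, ∀ y y', |φ (h y) - φ (h y')| ≤ K * dist y y') :
    ∃ K : ℝ≥0, LipschitzWith K h := by
  classical
  obtain ⟨D, hD⟩ := Metric.isBounded_iff.1 hXb
  have hw : ∀ z p : X, |dist p z| ≤ D := fun z p => by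
    rw [abs_of_nonneg dist_nonneg]; exact hD (mem_univ _) (mem_univ _)
  let φ : lp (fun _ : X => ℝ) 1 → X → ℝ := fun a z => weightFunctional (fun p => dist p z) (hw z) a
  have hφ : ∀ a, IsLip (φ a) := fun a => by
    refine isLip_of_real_bounds ‖a‖ (D * ‖a‖) (fun z z' => ?_) fun z => abs_tsum_mul_le (hw z) a
    have h1 : φ a z - φ a z' = ∑' p, a p * (dist p z - dist p z') := by
      simp only [mul_sub]
      exact ((summable_mul_of_abs_le (hw z) a).tsum_sub (summable_mul_of_abs_le (hw z') a)).symm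
    rw [h1, mul_comm]
    refine abs_tsum_mul_le (fun p => ?_) a
    rw [dist_comm p z, dist_comm p z']
    exact abs_dist_sub_le z z' p
  let L : Y × Y → (lp (fun _ : X => ℝ) 1 →L[ℝ] ℝ) := fun q =>
    (dist q.1 q.2)⁻¹ • (weightFunctional (fun p => dist p (h q.1)) (hw _) -
      weightFunctional (fun p => dist p (h q.2)) (hw _))
  have hL : ∀ a y y', L (y, y') a = (dist y y')⁻¹ * (φ a (h y) - φ a (h y')) := fun a y y' => rfl
  obtain ⟨C, hC⟩ := banach_steinhaus (g := L) (fun a => by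
    obtain ⟨K, hK⟩ := H (φ a) (hφ a)
    refine ⟨|K|, fun ⟨y, y'⟩ => ?_⟩
    rw [hL, norm_mul, norm_inv, Real.norm_of_nonneg dist_nonneg, Real.norm_eq_abs]
    rcases eq_or_lt_of_le (dist_nonneg (x := y) (y := y')) with h0 | h0
    · simp [← h0]
    · rw [inv_mul_le_iff₀ h0, mul_comm]
      exact (hK y y').trans (mul_le_mul_of_nonneg_right (le_abs_self K) dist_nonneg))
  refine ⟨C.toNNReal, LipschitzWith.of_dist_le' fun y y' => ?_⟩
  rcases eq_or_ne y y' with rfl | hne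
  · simp
  have h0 : 0 < dist y y' := dist_pos.2 hne
  have hs : ∀ z, φ (lp.single 1 (h y) (1 : ℝ)) z = dist (h y) z := fun z => by
    change ∑' p, (lp.single 1 (h y) (1 : ℝ) : lp (fun _ : X => ℝ) 1) p * dist p z = _
    rw [tsum_eq_single (h y) fun p hp => by rw [lp.single_apply, Pi.single_eq_of_ne hp, zero_mul]]
    simp
  have h1 := ((L (y, y')).le_opNorm (lp.single 1 (h y) (1 : ℝ))).trans
    (mul_le_mul_of_nonneg_right (hC (y, y')) (norm_nonneg _))
  rw [lp.norm_single (by simp), hL, hs, hs, norm_one, mul_one, dist_self, zero_sub, mul_neg,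
    norm_neg, norm_mul, norm_inv, Real.norm_of_nonneg dist_nonneg,
    Real.norm_of_nonneg dist_nonneg, inv_mul_le_iff₀ h0] at h1
  linarith

end PullBack

/-! ### An oscillating Lipschitz cut-off -/

section CutOff

variable {Y F : Type*} [MetricSpace Y] [NormedAddCommGroup F]

/-- The cut-off `max 0 (min 1 (4 d(y, A) / d(y, y₀) - 1))`: it vanishes close to `A` and equals `1`
far from `A`, distances to `A` being measured relative to the distance to `y₀`. At `y₀` itself the
quotient is `0` by convention, and so is the cut-off. -/
noncomputable def relCutOff (A : Set Y) (y₀ y : Y) : ℝ :=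
  max 0 (min 1 (4 * (infDist y A / dist y y₀) - 1))

lemma relCutOff_nonneg (A : Set Y) (y₀ y : Y) : 0 ≤ relCutOff A y₀ y := le_max_left _ _

lemma relCutOff_le_one (A : Set Y) (y₀ y : Y) : relCutOff A y₀ y ≤ 1 :=
  max_le zero_le_one (min_le_left _ _)

lemma abs_relCutOff_sub_le (A : Set Y) (y₀ y y' : Y) :
    |relCutOff A y₀ y - relCutOff A y₀ y'| ≤
      4 * |infDist y A / dist y y₀ - infDist y' A / dist y' y₀| := by
  set s := infDist y A / dist y y₀
  set s' := infDist y' A / dist y' y₀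
  have h1 := abs_max_sub_max_le_max 0 (min 1 (4 * s - 1)) 0 (min 1 (4 * s' - 1))
  have h2 := abs_min_sub_min_le_max 1 (4 * s - 1) 1 (4 * s' - 1)
  have h3 : |4 * s - 1 - (4 * s' - 1)| = 4 * |s - s'| := by
    rw [show 4 * s - 1 - (4 * s' - 1) = 4 * (s - s') by ring, abs_mul]; norm_num
  rw [h3, sub_self, abs_zero] at h2
  rw [sub_self, abs_zero] at h1
  exact h1.trans (max_le (by positivity) (h2.trans (max_le (by positivity) le_rfl)))

/-- The Lipschitz constant of `relCutOff A y₀` is of order `1 / d(·, y₀)`; multiplying by a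
Lipschitz function vanishing at `y₀` compensates for this. -/
lemma IsLip.relCutOff_smul [NormedSpace ℝ F] {A : Set Y} {y₀ : Y} (hA : y₀ ∈ closure A)
    {g : Y → F} (hg : IsLip g) (hg0 : g y₀ = 0) : IsLip (fun y => relCutOff A y₀ y • g y) := by
  obtain ⟨L, C, hL0, hL, hC⟩ := hg.exists_real_bounds
  have hgd : ∀ y, ‖g y‖ ≤ L * dist y y₀ := fun y => by simpa [hg0] using hL y y₀
  have hsm : ∀ y, ‖relCutOff A y₀ y • g y‖ ≤ ‖g y‖ := fun y => by
    rw [norm_smul, Real.norm_of_nonneg (relCutOff_nonneg _ _ _)]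
    exact mul_le_of_le_one_left (norm_nonneg _) (relCutOff_le_one _ _ _)
  have hA0 : infDist y₀ A = 0 := (mem_closure_iff_infDist_zero (closure_nonempty_iff.1 ⟨y₀, hA⟩)).1 hA
  have hinf : ∀ y, infDist y A ≤ dist y y₀ := fun y => by
    simpa [hA0] using infDist_le_infDist_add_dist (s := A) (x := y) (y := y₀)
  refine isLip_of_real_bounds (9 * L) C (fun y y' => ?_) fun y => (hsm y).trans (hC y)
  have hLd : 0 ≤ L * dist y y' := mul_nonneg hL0 dist_nonneg
  rcases eq_or_ne y y₀ with rfl | hy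
  · have h1 := (hsm y').trans (hgd y')
    rw [dist_comm] at h1
    rw [hg0, smul_zero, zero_sub, norm_neg]
    linarith
  rcases eq_or_ne y' y₀ with rfl | hy'
  · have h1 := (hsm y).trans (hgd y)
    rw [hg0, smul_zero, sub_zero]
    linarith
  have hd : 0 < dist y y₀ := dist_pos.2 hy
  have hd' : 0 < dist y' y₀ := dist_pos.2 hy'
  have hq : |infDist y A / dist y y₀ - infDist y' A / dist y' y₀| * dist y y₀ ≤ 2 * dist y y' := by
    have e : (infDist y A / dist y y₀ - infDist y' A / dist y' y₀) * dist y y₀ =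
        (infDist y A - infDist y' A) +
          infDist y' A / dist y' y₀ * (dist y' y₀ - dist y y₀) := by
      field_simp; ring
    have h1 : |infDist y A - infDist y' A| ≤ dist y y' := by
      simpa [Real.dist_eq] using (lipschitz_infDist_pt A).dist_le_mul y y'
    have h2 : |dist y' y₀ - dist y y₀| ≤ dist y y' := by
      rw [dist_comm y y']; exact abs_dist_sub_le y' y y₀
    have h3 : |infDist y' A / dist y' y₀| ≤ 1 := by
      rw [abs_of_nonneg (div_nonneg infDist_nonneg dist_nonneg), div_le_one hd']
      exact hinf y'
    rw [← abs_of_pos hd, ← abs_mul, abs_of_pos hd, e]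
    refine (abs_add_le _ _).trans ?_
    rw [abs_mul]
    nlinarith [mul_le_mul h3 h2 (abs_nonneg _) zero_le_one]
  have e : relCutOff A y₀ y • g y - relCutOff A y₀ y' • g y' =
      (relCutOff A y₀ y - relCutOff A y₀ y') • g y + relCutOff A y₀ y' • (g y - g y') := by
    rw [smul_sub, sub_smul]; abel
  have h1 : |relCutOff A y₀ y - relCutOff A y₀ y'| * ‖g y‖ ≤ 8 * (L * dist y y') := by
    calc _ ≤ 4 * |infDist y A / dist y y₀ - infDist y' A / dist y' y₀| * (L * dist y y₀) :=
          mul_le_mul (abs_relCutOff_sub_le _ _ _ _) (hgd y) (norm_nonneg _) (by positivity)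
      _ = 4 * L * (|infDist y A / dist y y₀ - infDist y' A / dist y' y₀| * dist y y₀) := by ring
      _ ≤ 4 * L * (2 * dist y y') := mul_le_mul_of_nonneg_left hq (by positivity)
      _ = _ := by ring
  have h2 : relCutOff A y₀ y' * ‖g y - g y'‖ ≤ 1 * (L * dist y y') :=
    mul_le_mul (relCutOff_le_one _ _ _) (hL y y') (norm_nonneg _) zero_le_one
  rw [e]
  refine (norm_add_le _ _).trans ?_
  rw [norm_smul, norm_smul, Real.norm_eq_abs, Real.norm_of_nonneg (relCutOff_nonneg _ _ _)]
  linarith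

lemma continuousAt_infDist_div {A : Set Y} {y₀ y : Y} (hy : y ≠ y₀) :
    ContinuousAt (fun z => infDist z A / dist z y₀) y :=
  (continuous_infDist_pt A).continuousAt.div (continuous_id.dist continuous_const).continuousAt
    (dist_pos.2 hy).ne'

lemma eventually_relCutOff_eq_zero {A : Set Y} {y₀ y : Y} (hy : y ≠ y₀) (hyA : y ∈ A) :
    ∀ᶠ z in nhds y, relCutOff A y₀ z = 0 := by
  have h0 : infDist y A / dist y y₀ < 1 / 4 := by rw [infDist_zero_of_mem hyA]; norm_num
  filter_upwards [(continuousAt_infDist_div (A := A) hy).eventually_lt_const h0] with z hz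
  exact max_eq_left ((min_le_right _ _).trans (by linarith))

lemma eventually_relCutOff_eq_one {A : Set Y} {y₀ y : Y} (hy : y ≠ y₀)
    (hyA : 1 / 2 * dist y y₀ < infDist y A) : ∀ᶠ z in nhds y, relCutOff A y₀ z = 1 := by
  have h0 : 1 / 2 < infDist y A / dist y y₀ := by rwa [lt_div_iff₀ (dist_pos.2 hy)]
  filter_upwards [(continuousAt_infDist_div (A := A) hy).eventually_const_lt h0] with z hz
  rw [relCutOff, min_eq_left (by linarith), max_eq_right zero_le_one]

/-- A point that is not isolated is the limit of a sequence approaching it at geometric speed. -/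
lemma exists_seq_dist_lt {y₀ : Y} (hy₀ : ∀ ε > 0, ∃ y, y ≠ y₀ ∧ dist y y₀ < ε) :
    ∃ u : ℕ → Y, (∀ n, u n ≠ y₀) ∧ (∀ m n, m < n → dist (u n) y₀ < 1 / 4 * dist (u m) y₀) ∧
      Filter.Tendsto u Filter.atTop (nhds y₀) := by
  have hstep : ∀ y : {y // y ≠ y₀}, ∃ z : {y // y ≠ y₀}, dist z.1 y₀ < 1 / 4 * dist y.1 y₀ :=
    fun y => by
      obtain ⟨z, hz, hz'⟩ := hy₀ (1 / 4 * dist y.1 y₀) (by have := dist_pos.2 y.2; positivity)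
      exact ⟨⟨z, hz⟩, hz'⟩
  choose s hs using hstep
  obtain ⟨z₀, hz₀, -⟩ := hy₀ 1 one_pos
  let u : ℕ → {y // y ≠ y₀} := fun n => s^[n] ⟨z₀, hz₀⟩
  have hu : ∀ n, dist (u (n + 1)).1 y₀ < 1 / 4 * dist (u n).1 y₀ := fun n => by
    simp only [u, iterate_succ_apply']; exact hs _
  have hmono : StrictAnti fun n => dist (u n).1 y₀ := strictAnti_nat_of_succ_lt fun n => by
    have := hu n; have := dist_nonneg (x := (u n).1) (y := y₀); linarith
  refine ⟨fun n => (u n).1, fun n => (u n).2, fun m n hmn => ?_, ?_⟩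
  · exact (hmono.antitone (Nat.succ_le_of_lt hmn)).trans_lt (hu m)
  · rw [tendsto_iff_dist_tendsto_zero]
    have hgeo : ∀ n, dist (u n).1 y₀ ≤ dist (u 0).1 y₀ * (1 / 4) ^ n := fun n => by
      induction n with
      | zero => simp
      | succ k ih => rw [pow_succ]; have := hu k; linarith
    refine squeeze_zero (fun n => dist_nonneg) hgeo ?_
    simpa using (tendsto_pow_atTop_nhds_zero_of_lt_one (r := (1 / 4 : ℝ)) (by norm_num)
      (by norm_num)).const_mul (dist (u 0).1 y₀)

end CutOff

/-! ### The fibre maps of a biseparating map -/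

section Bisep

variable {X Y E F : Type*} [MetricSpace X] [MetricSpace Y]
  [NormedAddCommGroup E] [NormedSpace ℝ E] [NormedAddCommGroup F] [NormedSpace ℝ F]
  {T : (X → E) → (Y → F)} {h : Y → X}

lemma IsBisep.map_sub (hT : IsBisep ℝ T) {f g : X → E} (hf : IsLip f) (hg : IsLip g) :
    IsLip (f - g) ∧ T (f - g) = T f - T g := by
  have hn : IsLip ((-1 : ℝ) • g) := (isLip_const (-1 : ℝ)).smul hg
  have he : f - g = f + (-1 : ℝ) • g := by rw [neg_one_smul, sub_eq_add_neg]
  refine ⟨?_, ?_⟩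
  · obtain ⟨K, C, -, hK, hC⟩ := hf.exists_real_bounds
    obtain ⟨L, D, -, hL, hD⟩ := hg.exists_real_bounds
    refine isLip_of_real_bounds (K + L) (C + D) (fun x y => ?_) fun x =>
      (norm_sub_le _ _).trans (add_le_add (hC x) (hD x))
    have e : (f - g) x - (f - g) y = (f x - f y) - (g x - g y) := by
      simp only [Pi.sub_apply]; abel
    rw [e, add_mul]
    exact (norm_sub_le _ _).trans (add_le_add (hK x y) (hL x y))
  · rw [he, hT.map_add _ _ hf hn, hT.map_smul _ _ hg, neg_one_smul, sub_eq_add_neg]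

lemma IsBisep.const_smul (hT : IsBisep ℝ T) (c : ℝ) (e : E) (y : Y) :
    T (fun _ => c • e) y = c • T (fun _ => e) y :=
  congrFun (hT.map_smul c (fun _ => e) (isLip_const e)) y

/-- `T⁻¹` is local: a function whose image vanishes near `y` vanishes at `h y`. Otherwise a small
bump at `h y` would have image disjoint from `T f` without being disjoint from `f`. -/
lemma IsBisep.eq_zero_of_eventually (hT : IsBisep ℝ T) (hhom : IsHomeomorph h)
    (hrep : ∀ f, IsLip f → ∀ y, T f y = T (fun _ => f (h y)) y)
    {f : X → E} (hf : IsLip f) {y : Y} (hy : ∀ᶠ z in nhds y, T f z = 0) : f (h y) = 0 := by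
  by_contra hne
  have hU : h '' {z | T f z = 0} ∈ nhds (h y) := hhom.isOpenMap.image_mem_nhds hy
  obtain ⟨ε, hε, hball⟩ := Metric.mem_nhds_iff.1 hU
  let φ : X → ℝ := fun x => max (ε - dist x (h y)) 0
  have hφ : IsLip φ := by
    refine isLip_of_real_bounds 1 ε (fun x x' => ?_) fun x => ?_
    · refine (abs_max_sub_max_le_abs _ _ _).trans ?_
      rw [sub_sub_sub_cancel_left, one_mul, dist_comm x x']
      exact abs_dist_sub_le x' x (h y)
    · rw [Real.norm_of_nonneg (le_max_right _ _)]
      exact max_le (by linarith [dist_nonneg (x := x) (y := h y)]) hε.le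
  have hk : IsLip fun x => φ x • f (h y) := hφ.smul (isLip_const _)
  have hdisj : coz (T f) ∩ coz (T fun x => φ x • f (h y)) = ∅ := by
    refine eq_empty_of_forall_notMem fun z hz => hz.2 ?_
    have hz' : h z ∉ ball (h y) ε := fun hmem => by
      obtain ⟨w, hw, hwz⟩ := hball hmem
      exact hz.1 (hhom.injective hwz ▸ hw)
    have h0 : φ (h z) = 0 := max_eq_right (by rw [mem_ball, not_lt] at hz'; linarith)
    rw [hrep _ hk, hT.const_smul, h0, zero_smul]
  have hpos : φ (h y) = ε := by simp [φ, hε.le]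
  have hmem : h y ∈ coz f ∩ coz fun x => φ x • f (h y) :=
    ⟨hne, smul_ne_zero (by rw [hpos]; exact hε.ne') hne⟩
  rw [hT.sep_inv _ _ hf hk hdisj] at hmem
  exact hmem

/-- The fibre maps `e ↦ (T ê) y` are injective. At a non-isolated point `y₀`, cutting `T f` off
along a sequence tending to `y₀` gives `T f₁` with `f₁ ∘ h` alternating between `f ∘ h` and `0`
along that sequence, so continuity of `f₁` forces `f (h y₀) = 0`. -/
lemma IsBisep.eq_zero_of_apply_eq_zero (hT : IsBisep ℝ T) (hhom : IsHomeomorph h)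
    (hrep : ∀ f, IsLip f → ∀ y, T f y = T (fun _ => f (h y)) y)
    {f : X → E} (hf : IsLip f) {y₀ : Y} (hy₀ : T f y₀ = 0) : f (h y₀) = 0 := by
  by_cases hiso : ∀ ε > 0, ∃ y, y ≠ y₀ ∧ dist y y₀ < ε
  · obtain ⟨u, hu0, hu4, hulim⟩ := exists_seq_dist_lt hiso
    have hodd : Filter.Tendsto (fun n : ℕ => u (2 * n + 1)) Filter.atTop (nhds y₀) :=
      hulim.comp (Filter.tendsto_atTop_mono (fun n => by dsimp; omega) Filter.tendsto_id)
    have heven : Filter.Tendsto (fun n : ℕ => u (2 * n)) Filter.atTop (nhds y₀) :=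
      hulim.comp (Filter.tendsto_atTop_mono (fun n => by dsimp; omega) Filter.tendsto_id)
    let A : Set Y := range fun n : ℕ => u (2 * n + 1)
    have hA : y₀ ∈ closure A := mem_closure_of_tendsto hodd
      (Filter.Eventually.of_forall fun n => mem_range_self n)
    have hAne : A.Nonempty := range_nonempty _
    have hfar : ∀ n, 1 / 2 * dist (u (2 * n)) y₀ < infDist (u (2 * n)) A := fun n => by
      have hpos := dist_pos.2 (hu0 (2 * n))
      refine lt_of_lt_of_le (b := 3 / 4 * dist (u (2 * n)) y₀) (by linarith) ?_
      rw [le_infDist hAne]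
      rintro _ ⟨m, rfl⟩
      dsimp only
      rcases lt_or_gt_of_ne (show 2 * n ≠ 2 * m + 1 by omega) with hlt | hlt
      · have := hu4 _ _ hlt
        linarith [dist_triangle (u (2 * n)) (u (2 * m + 1)) y₀]
      · have := hu4 _ _ hlt
        have h3 := dist_triangle (u (2 * m + 1)) (u (2 * n)) y₀
        rw [dist_comm (u (2 * m + 1)) (u (2 * n))] at h3
        linarith
    obtain ⟨f₁, hf₁, hTf₁⟩ := hT.surj _ ((hT.maps_lip f hf).relCutOff_smul hA hy₀)
    have h_odd : ∀ n, f₁ (h (u (2 * n + 1))) = 0 := fun n =>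
      hT.eq_zero_of_eventually hhom hrep hf₁ <| by
        filter_upwards [eventually_relCutOff_eq_zero (A := A) (hu0 _) ⟨n, rfl⟩] with z hz
        rw [hTf₁]
        simp only [hz, zero_smul]
    have h_even : ∀ n, f₁ (h (u (2 * n))) = f (h (u (2 * n))) := fun n => by
      have hs := hT.map_sub hf₁ hf
      refine sub_eq_zero.1 (hT.eq_zero_of_eventually hhom hrep hs.1 ?_)
      filter_upwards [eventually_relCutOff_eq_one (hu0 _) (hfar n)] with z hz
      rw [hs.2, Pi.sub_apply, hTf₁]
      simp only [hz, one_smul, sub_self]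
    obtain ⟨⟨K₁, hK₁⟩, -⟩ := hf₁
    obtain ⟨⟨K, hK⟩, -⟩ := hf
    have hc₁ : Continuous fun y => f₁ (h y) := hK₁.continuous.comp hhom.continuous
    have hc : Continuous fun y => f (h y) := hK.continuous.comp hhom.continuous
    have l1 : f₁ (h y₀) = 0 := tendsto_nhds_unique ((hc₁.tendsto y₀).comp hodd)
      (tendsto_const_nhds.congr fun n => (h_odd n).symm)
    have l2 : f₁ (h y₀) = f (h y₀) := tendsto_nhds_unique ((hc₁.tendsto y₀).comp heven)
      (((hc.tendsto y₀).comp heven).congr fun n => (h_even n).symm)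
    rw [← l2, l1]
  · push Not at hiso
    obtain ⟨ε, hε, hiso⟩ := hiso
    refine hT.eq_zero_of_eventually hhom hrep hf ?_
    filter_upwards [ball_mem_nhds y₀ hε] with z hz
    by_contra hz0
    exact absurd (hiso z fun e => hz0 (e ▸ hy₀)) (not_le.2 hz)

theorem IsBisep.exists_lipschitzWith [Nontrivial F] (hXb : IsBounded (univ : Set X))
    (hT : IsBisep ℝ T) (hrep : ∀ f, IsLip f → ∀ y, T f y = T (fun _ => f (h y)) y) :
    ∃ K : ℝ≥0, LipschitzWith K h := by
  obtain ⟨u, hu⟩ := exists_ne (0 : F)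
  obtain ⟨f, hf, hTf⟩ := hT.surj _ (isLip_const u)
  refine exists_lipschitzWith_of_comp hXb h fun φ hφ => ?_
  obtain ⟨K, -, -, hK, -⟩ := (hT.maps_lip _ (hφ.smul hf)).exists_real_bounds
  have hval : ∀ y, T (fun x => φ x • f x) y = φ (h y) • u := fun y => by
    rw [hrep _ (hφ.smul hf), hT.const_smul, ← hrep f hf, hTf]
  have hu' : 0 < ‖u‖ := norm_pos_iff.2 hu
  refine ⟨K / ‖u‖, fun y y' => ?_⟩
  have h1 := hK y y'
  rw [hval, hval, ← sub_smul, norm_smul, Real.norm_eq_abs, ← le_div_iff₀ hu'] at h1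
  rwa [div_mul_eq_mul_div]

theorem IsBisep.exists_antilipschitzWith [Nontrivial E] (hYb : IsBounded (univ : Set Y))
    (hT : IsBisep ℝ T) (hhom : IsHomeomorph h)
    (hrep : ∀ f, IsLip f → ∀ y, T f y = T (fun _ => f (h y)) y) :
    ∃ K : ℝ≥0, AntilipschitzWith K h := by
  obtain ⟨k, hkh, hhk⟩ := bijective_iff_has_inverse.1 hhom.bijective
  suffices ∃ K : ℝ≥0, LipschitzWith K k from this.imp fun K hK => hK.to_rightInverse hkh
  obtain ⟨e, he⟩ := exists_ne (0 : E)
  have he' : 0 < ‖e‖ := norm_pos_iff.2 he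
  refine exists_lipschitzWith_of_comp hYb k fun φ hφ => ?_
  obtain ⟨f, hf, hTf⟩ := hT.surj _ (hφ.smul (hT.maps_lip _ (isLip_const e)))
  have hval : ∀ x, f x = φ (k x) • e := fun x => by
    have hs := hT.map_sub hf (isLip_const (φ (k x) • e))
    have h0 := hT.eq_zero_of_apply_eq_zero hhom hrep hs.1 (y₀ := k x) (by
      rw [hs.2, Pi.sub_apply, hTf, hT.const_smul, sub_self])
    rw [hhk x] at h0
    exact sub_eq_zero.1 h0
  obtain ⟨K, -, -, hK, -⟩ := hf.exists_real_bounds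
  refine ⟨K / ‖e‖, fun x x' => ?_⟩
  have h1 := hK x x'
  rw [hval, hval, ← sub_smul, norm_smul, Real.norm_eq_abs, ← le_div_iff₀ he'] at h1
  rwa [div_mul_eq_mul_div]

end Bisep

/-- If `T : Lip(X,E) → Lip(Y,F)` is biseparating and `h : Y → X` is a
homeomorphism with `(T f) y = (T (widehat{f (h y)})) y` for all `f` and `y`, then `h` is
bi-Lipschitz: both `h` and `h⁻¹` are Lipschitz. -/
theorem biseparating_support_map_biLipschitz
    {𝕂 X Y E F : Type*} [RCLike 𝕂]
    [MetricSpace X] [CompleteSpace X] [MetricSpace Y] [CompleteSpace Y]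
    [NormedAddCommGroup E] [NormedSpace 𝕂 E] [Nontrivial E]
    [NormedAddCommGroup F] [NormedSpace 𝕂 F] [Nontrivial F]
    (hXb : IsBounded (univ : Set X)) (hYb : IsBounded (univ : Set Y))
    (T : (X → E) → (Y → F)) (hT : IsBisep 𝕂 T)
    (h : Y → X) (hhom : IsHomeomorph h)
    (hrep : ∀ f, IsLip f → ∀ y, T f y = T (fun _ => f (h y)) y) :
    (∃ K : ℝ≥0, LipschitzWith K h) ∧ (∃ K : ℝ≥0, AntilipschitzWith K h) := by
  let _ : NormedSpace ℝ E := NormedSpace.restrictScalars ℝ 𝕂 E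
  let _ : NormedSpace ℝ F := NormedSpace.restrictScalars ℝ 𝕂 F
  have hTR : IsBisep ℝ T :=
    { maps_lip := hT.maps_lip
      map_add := hT.map_add
      map_smul := fun c f hf => hT.map_smul (algebraMap ℝ 𝕂 c) f hf
      inj := hT.inj
      surj := hT.surj
      sep := hT.sep
      sep_inv := hT.sep_inv }
  exact ⟨hTR.exists_lipschitzWith hXb hrep, hTR.exists_antilipschitzWith hYb hhom hrep⟩
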